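/- arXiv:0803.3469 — 3 statements merged into one kernel-verified Lean document; each statement's English description precedes it below -/
import Mathlib

section
/- Fix integers g ≥ 2, k with 1 ≤ k ≤ g−1, i ≥ 0, and s ≥ 1. For every τ₁ ∈ ℍ_k and τ₂ ∈ ℍ_{g−k}, the restriction of P_{i,s}^{(g)} to the block-diagonal locus factors as P_{i,s}^{(g)}(τ₁ ⊕ τ₂) = Σ_{n=0}^{i} Σ_{m=0}^{i} N(n,m;i) · P_{n,2^{i−n}s}^{(k)}(τ₁) · P_{m,2^{i−m}s}^{(g−k)}(τ₂), where the summands with n+m < i vanish because N(n,m;i) = 0 there. -/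
open scoped BigOperators

abbrev ThetaChar (g : ℕ) := (Fin g → ZMod 2) × (Fin g → ZMod 2)

/-- Theta constant with characteristic `v = [ε; δ]`. -/
noncomputable def theta {g : ℕ} (v : ThetaChar g) (τ : Matrix (Fin g) (Fin g) ℂ) : ℂ :=
  ∑' n : Fin g → ℤ,
    Complex.exp ((Real.pi : ℂ) * Complex.I *
      ((∑ i, ∑ j, ((n i : ℂ) + ((v.1 i).val : ℂ) / 2) * τ i j *
          ((n j : ℂ) + ((v.1 j).val : ℂ) / 2)) +
        ∑ i, ((n i : ℂ) + ((v.1 i).val : ℂ) / 2) * ((v.2 i).val : ℂ)))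

/-- Siegel upper half-space membership. -/
def IsSiegel {g : ℕ} (τ : Matrix (Fin g) (Fin g) ℂ) : Prop :=
  τ.IsSymm ∧ Matrix.PosDef (τ.map Complex.im)

noncomputable def Pset {g : ℕ} (M : Set (ThetaChar g)) (τ : Matrix (Fin g) (Fin g) ℂ) : ℂ :=
  ∏ᶠ v ∈ M, theta v τ

noncomputable def Pform (g i s : ℕ) (τ : Matrix (Fin g) (Fin g) ℂ) : ℂ :=
  ∑ᶠ V ∈ {V : Submodule (ZMod 2) (ThetaChar g) | Module.finrank (ZMod 2) ↥V = i},
    Pset (V : Set (ThetaChar g)) τ ^ s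

noncomputable def Nsub (n m i : ℕ) : ℕ :=
  Nat.card {V : Submodule (ZMod 2) ((Fin n → ZMod 2) × (Fin m → ZMod 2)) //
    Module.finrank (ZMod 2) ↥V = i ∧
    V.map (LinearMap.fst (ZMod 2) (Fin n → ZMod 2) (Fin m → ZMod 2)) = ⊤ ∧
    V.map (LinearMap.snd (ZMod 2) (Fin n → ZMod 2) (Fin m → ZMod 2)) = ⊤}

noncomputable def blockDiag {k l : ℕ} (τ₁ : Matrix (Fin k) (Fin k) ℂ)
    (τ₂ : Matrix (Fin l) (Fin l) ℂ) : Matrix (Fin (k + l)) (Fin (k + l)) ℂ :=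
  Matrix.reindex finSumFinEquiv finSumFinEquiv (Matrix.fromBlocks τ₁ 0 0 τ₂)

def chproj1 (k l : ℕ) : ThetaChar (k + l) →ₗ[ZMod 2] ThetaChar k :=
  (LinearMap.funLeft (ZMod 2) (ZMod 2) (Fin.castAdd l)).prodMap
    (LinearMap.funLeft (ZMod 2) (ZMod 2) (Fin.castAdd l))

def chproj2 (k l : ℕ) : ThetaChar (k + l) →ₗ[ZMod 2] ThetaChar l :=
  (LinearMap.funLeft (ZMod 2) (ZMod 2) (Fin.natAdd k)).prodMap
    (LinearMap.funLeft (ZMod 2) (ZMod 2) (Fin.natAdd k))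

def weil {g : ℕ} (v w : ThetaChar g) : ZMod 2 :=
  (∑ i, v.1 i * w.2 i) + (∑ i, v.2 i * w.1 i)

def evenChar {g : ℕ} (v : ThetaChar g) : Prop := (∑ i, v.1 i * v.2 i) = 0

def qform {g : ℕ} (Δ v : ThetaChar g) : ZMod 2 :=
  (∑ i, v.1 i * v.2 i) + (∑ i, Δ.1 i * v.2 i) + (∑ i, Δ.2 i * v.1 i)

/-!
On the block-diagonal locus the absolutely convergent theta series splits as
`θ[v](τ₁ ⊕ τ₂) = θ[v₁](τ₁) θ[v₂](τ₂)`. Let `V` be an `i`-dimensional space of characteristics with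
projections `U` and `W`. The fibres of `V → U` are cosets of its kernel, so they all have
`2 ^ (i - dim U)` elements, and likewise for `W`; hence
`P_V = P_U ^ 2 ^ (i - dim U) * P_W ^ 2 ^ (i - dim W)`. It remains to group the subspaces `V` by
their projections: choosing bases of `U` and `W` shows that the number of `V` above `(U, W)` is
`N(dim U, dim W; i)`.
-/

section Theta

open scoped Matrix

open scoped MatrixOrder Matrix.Norms.L2Operator in
theorem exists_pos_mul_dotProduct_self_le_of_posDef {ι : Type*} [Fintype ι] {Y : Matrix ι ι ℝ}
    (hY : Y.PosDef) : ∃ c > 0, ∀ x : ι → ℝ, c * (x ⬝ᵥ x) ≤ x ⬝ᵥ Y *ᵥ x := by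
  classical
  rcases isEmpty_or_nonempty ι with _ | _
  · exact ⟨1, one_pos, fun x => by simp [dotProduct]⟩
  obtain ⟨c, hc, hcY⟩ := (CFC.exists_pos_algebraMap_le_iff hY.isHermitian.isSelfAdjoint).2
    fun _ hx => hY.isStrictlyPositive.spectrum_pos hx
  refine ⟨c, hc, fun x => ?_⟩
  simpa [Algebra.algebraMap_eq_smul_one, Matrix.sub_mulVec, Matrix.smul_mulVec] using
    (Matrix.le_iff.1 hcY).dotProduct_mulVec_nonneg x

theorem summable_exp_neg_pi_mul_add_sq {c : ℝ} (hc : 0 < c) (a : ℝ) :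
    Summable fun n : ℤ => Real.exp (-Real.pi * (c * (n + a) ^ 2)) := by
  have hjacobi : Summable (jacobiTheta₂_term · ((c * a : ℝ) * Complex.I) (c * Complex.I)) :=
    (summable_jacobiTheta₂_term_iff _ _).2 (by simpa using hc)
  refine (hjacobi.norm.mul_left (Real.exp (-Real.pi * (c * a ^ 2)))).congr fun n => ?_
  rw [norm_jacobiTheta₂_term, ← Real.exp_add]
  simp only [Complex.im_ofReal_mul, Complex.I_im]
  ring_nf

theorem summable_pi_prod_of_nonneg {g : ℕ} {α : Fin g → Type*} {f : ∀ j, α j → ℝ}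
    (hf₀ : ∀ j a, 0 ≤ f j a) (hf : ∀ j, Summable (f j)) :
    Summable fun x : ∀ j, α j => ∏ j, f j (x j) := by
  induction g with
  | zero => exact Summable.of_finite
  | succ g ih =>
    have htail : Summable fun x : ∀ j : Fin g, α j.succ => ∏ j, f j.succ (x j) :=
      ih (fun j => hf₀ j.succ) fun j => hf j.succ
    rw [← (Fin.consEquiv α).summable_iff]
    simpa [Function.comp_def, Fin.consEquiv, Fin.prod_univ_succ] using
      (hf 0).mul_of_nonneg htail (hf₀ 0) fun _ => Finset.prod_nonneg fun _ _ => hf₀ _ _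

theorem summable_exp_neg_pi_mul_quadratic {g : ℕ} {Y : Matrix (Fin g) (Fin g) ℝ} (hY : Y.PosDef)
    (a : Fin g → ℝ) :
    Summable fun n : Fin g → ℤ =>
      Real.exp (-Real.pi * ((fun j => n j + a j) ⬝ᵥ Y *ᵥ fun j => n j + a j)) := by
  obtain ⟨c, hc, hcY⟩ := exists_pos_mul_dotProduct_self_le_of_posDef hY
  have hgauss : Summable fun n : Fin g → ℤ =>
      ∏ j, Real.exp (-Real.pi * (c * (n j + a j) ^ 2)) :=
    summable_pi_prod_of_nonneg (f := fun j (m : ℤ) => Real.exp (-Real.pi * (c * (m + a j) ^ 2)))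
      (fun _ _ => (Real.exp_pos _).le)
      fun j => summable_exp_neg_pi_mul_add_sq hc (a j)
  refine hgauss.of_nonneg_of_le (fun _ => (Real.exp_pos _).le) fun n => ?_
  have hquad : ∑ j, c * (n j + a j) ^ 2 ≤ (fun j => n j + a j) ⬝ᵥ Y *ᵥ fun j => n j + a j := by
    simpa only [dotProduct, Finset.mul_sum, ← sq] using hcY fun j => n j + a j
  rw [← Real.exp_sum, ← Finset.mul_sum, Real.exp_le_exp]
  exact mul_le_mul_of_nonpos_left hquad (neg_nonpos.2 Real.pi_pos.le)

/-- The summand at `n` of the series defining `theta v τ`. -/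
noncomputable def thetaTerm {g : ℕ} (v : ThetaChar g) (τ : Matrix (Fin g) (Fin g) ℂ)
    (n : Fin g → ℤ) : ℂ :=
  Complex.exp ((Real.pi : ℂ) * Complex.I *
    ((∑ i, ∑ j, ((n i : ℂ) + ((v.1 i).val : ℂ) / 2) * τ i j *
        ((n j : ℂ) + ((v.1 j).val : ℂ) / 2)) +
      ∑ i, ((n i : ℂ) + ((v.1 i).val : ℂ) / 2) * ((v.2 i).val : ℂ)))

theorem norm_thetaTerm {g : ℕ} (v : ThetaChar g) (τ : Matrix (Fin g) (Fin g) ℂ)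
    (n : Fin g → ℤ) :
    ‖thetaTerm v τ n‖ = Real.exp (-Real.pi *
      ((fun j => n j + ((v.1 j).val : ℝ) / 2) ⬝ᵥ
        τ.map Complex.im *ᵥ fun j => n j + ((v.1 j).val : ℝ) / 2)) := by
  have him (j : Fin g) : ((n j : ℂ) + ((v.1 j).val : ℂ) / 2).im = 0 := by
    simp [-ZMod.natCast_val]
  have hre (j : Fin g) : ((n j : ℂ) + ((v.1 j).val : ℂ) / 2).re = n j + ((v.1 j).val : ℝ) / 2 := by
    simp [-ZMod.natCast_val]
  simp [-ZMod.natCast_val, thetaTerm, Complex.norm_exp, Complex.mul_re, Complex.mul_im, dotProduct,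
    Matrix.mulVec, Finset.mul_sum, him, hre, mul_assoc]

theorem summable_norm_thetaTerm {g : ℕ} (v : ThetaChar g) {τ : Matrix (Fin g) (Fin g) ℂ}
    (hτ : (τ.map Complex.im).PosDef) : Summable fun n => ‖thetaTerm v τ n‖ := by
  simpa only [norm_thetaTerm] using
    summable_exp_neg_pi_mul_quadratic hτ fun j => ((v.1 j).val : ℝ) / 2

theorem thetaTerm_blockDiag_append {k l : ℕ} (v : ThetaChar (k + l))
    (τ₁ : Matrix (Fin k) (Fin k) ℂ) (τ₂ : Matrix (Fin l) (Fin l) ℂ) (n : Fin k → ℤ)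
    (m : Fin l → ℤ) :
    thetaTerm v (blockDiag τ₁ τ₂) (Fin.append n m) =
      thetaTerm (chproj1 k l v) τ₁ n * thetaTerm (chproj2 k l v) τ₂ m := by
  rw [thetaTerm, thetaTerm, thetaTerm, ← Complex.exp_add]
  congr 1
  simp only [blockDiag, Matrix.reindex_apply, Matrix.submatrix_apply, Fin.sum_univ_add,
    finSumFinEquiv_symm_apply_castAdd, finSumFinEquiv_symm_apply_natAdd, Fin.append_left,
    Fin.append_right, Matrix.fromBlocks_apply₁₁, Matrix.fromBlocks_apply₁₂,
    Matrix.fromBlocks_apply₂₁, Matrix.fromBlocks_apply₂₂, Matrix.zero_apply, mul_zero, zero_mul,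
    Finset.sum_const_zero, add_zero, zero_add, chproj1, chproj2, LinearMap.prodMap_apply,
    LinearMap.funLeft_apply]
  ring

theorem theta_blockDiag {k l : ℕ} (v : ThetaChar (k + l)) {τ₁ : Matrix (Fin k) (Fin k) ℂ}
    {τ₂ : Matrix (Fin l) (Fin l) ℂ} (hτ₁ : (τ₁.map Complex.im).PosDef)
    (hτ₂ : (τ₂.map Complex.im).PosDef) :
    theta v (blockDiag τ₁ τ₂) = theta (chproj1 k l v) τ₁ * theta (chproj2 k l v) τ₂ :=
  calc theta v (blockDiag τ₁ τ₂)
      = ∑' p : (Fin k → ℤ) × (Fin l → ℤ),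
          thetaTerm v (blockDiag τ₁ τ₂) (Fin.append p.1 p.2) :=
        ((Fin.appendEquiv k l).tsum_eq _).symm
    _ = ∑' p : (Fin k → ℤ) × (Fin l → ℤ),
          thetaTerm (chproj1 k l v) τ₁ p.1 * thetaTerm (chproj2 k l v) τ₂ p.2 :=
        tsum_congr fun p => thetaTerm_blockDiag_append v τ₁ τ₂ p.1 p.2
    _ = theta (chproj1 k l v) τ₁ * theta (chproj2 k l v) τ₂ :=
        (tsum_mul_tsum_of_summable_norm (summable_norm_thetaTerm _ hτ₁)
          (summable_norm_thetaTerm _ hτ₂)).symm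

end Theta

theorem prod_comp_addMonoidHom_of_surjective {G H M : Type*} [AddGroup G] [AddGroup H]
    [CommMonoid M] [Fintype G] [Fintype H] (p : G →+ H) (hp : Function.Surjective p) (f : H → M) :
    ∏ x, f (p x) = (∏ y, f y) ^ Nat.card p.ker := by
  classical
  have card_fiber (y : H) : Finset.card {x | p x = y} = Nat.card p.ker := by
    rw [AddMonoidHom.card_fiber_eq_of_mem_range p (hp y) (hp 0), ← Fintype.card_subtype,
      ← Nat.card_eq_fintype_card]
    rfl
  rw [← Finset.prod_fiberwise' Finset.univ p f, ← Finset.prod_pow]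
  simp only [Finset.prod_const, card_fiber]

section Subspaces

variable {K A B : Type*} [Field K] [AddCommGroup A] [Module K A] [AddCommGroup B] [Module K B]

theorem prod_comp_linearMap_eq_prod_map_pow {M : Type*} [CommMonoid M] (p : A →ₗ[K] B)
    (V : Submodule K A) [Fintype V] [Fintype (V.map p)] (f : B → M) :
    ∏ v : V, f (p v) = (∏ u : V.map p, f u) ^
      Nat.card K ^ (Module.finrank K V - Module.finrank K (V.map p)) := by
  have hp : Function.Surjective (p.submoduleMap V) := p.submoduleMap_surjective V
  have hker : Module.finrank K (p.submoduleMap V).ker =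
      Module.finrank K V - Module.finrank K (V.map p) := by
    rw [← (p.submoduleMap V).finrank_range_add_finrank_ker, LinearMap.range_eq_top.2 hp,
      finrank_top, Nat.add_sub_cancel_left]
  rw [← hker, ← Module.natCard_eq_pow_finrank]
  exact prod_comp_addMonoidHom_of_surjective (p.submoduleMap V).toAddMonoidHom hp fun u => f u

variable (K) in
/-- The `i`-dimensional subspaces of `A × B` whose projections to `A` and `B` are exactly `U` and
`W`, that is, the `i`-dimensional subdirect products of `U` and `W`. -/
def subdirectSubspaces (U : Submodule K A) (W : Submodule K B) (i : ℕ) :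
    Set (Submodule K (A × B)) :=
  {V | Module.finrank K V = i ∧ V.map (LinearMap.fst K A B) = U ∧ V.map (LinearMap.snd K A B) = W}

variable (K) in
/-- The number of `i`-dimensional subdirect products of `K ^ n` and `K ^ m`, written `N(n, m; i)`
when `K = 𝔽₂`; it is `0` by convention if there are infinitely many of them. -/
noncomputable def subdirectCount (n m i : ℕ) : ℕ :=
  (subdirectSubspaces K (⊤ : Submodule K (Fin n → K)) (⊤ : Submodule K (Fin m → K)) i).ncard

theorem subdirectSubspaces_map {X Y : Type*} [AddCommGroup X] [Module K X] [AddCommGroup Y]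
    [Module K Y] {φ : X →ₗ[K] A} {ψ : Y →ₗ[K] B} (hφ : Function.Injective φ)
    (hψ : Function.Injective ψ) (U : Submodule K X) (W : Submodule K Y) (i : ℕ) :
    subdirectSubspaces K (U.map φ) (W.map ψ) i =
      (subdirectSubspaces K U W i).image (Submodule.map (φ.prodMap ψ)) := by
  have hφψ : Function.Injective (φ.prodMap ψ) := hφ.prodMap hψ
  have map_fst (V : Submodule K (X × Y)) : (V.map (φ.prodMap ψ)).map (LinearMap.fst K A B) =
      (V.map (LinearMap.fst K X Y)).map φ := by
    simp only [← Submodule.map_comp]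
    rfl
  have map_snd (V : Submodule K (X × Y)) : (V.map (φ.prodMap ψ)).map (LinearMap.snd K A B) =
      (V.map (LinearMap.snd K X Y)).map ψ := by
    simp only [← Submodule.map_comp]
    rfl
  have mem_iff (V : Submodule K (X × Y)) :
      V.map (φ.prodMap ψ) ∈ subdirectSubspaces K (U.map φ) (W.map ψ) i ↔
        V ∈ subdirectSubspaces K U W i := by
    simp only [subdirectSubspaces, Set.mem_ofPred_eq, map_fst, map_snd,
      (Submodule.map_injective_of_injective hφ).eq_iff,
      (Submodule.map_injective_of_injective hψ).eq_iff,
      (Submodule.equivMapOfInjective (φ.prodMap ψ) hφψ V).finrank_eq]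
  refine Set.Subset.antisymm (fun V hV => ?_) (Set.image_subset_iff.2 fun V => (mem_iff V).2)
  have hrange : V ≤ (φ.prodMap ψ).range := fun v hv => by
    obtain ⟨x, -, hx⟩ := hV.2.1.le (Submodule.mem_map_of_mem hv)
    obtain ⟨y, -, hy⟩ := hV.2.2.le (Submodule.mem_map_of_mem hv)
    exact ⟨(x, y), Prod.ext hx hy⟩
  have hV_eq : (V.comap (φ.prodMap ψ)).map (φ.prodMap ψ) = V := Submodule.map_comap_eq_self hrange
  exact ⟨_, (mem_iff _).1 (hV_eq.symm ▸ hV), hV_eq⟩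

theorem exists_injective_range_eq (U : Submodule K A) [FiniteDimensional K U] :
    ∃ φ : (Fin (Module.finrank K U) → K) →ₗ[K] A, Function.Injective φ ∧ φ.range = U := by
  let e := (Module.finBasis K U).equivFun.symm
  exact ⟨U.subtype ∘ₗ e.toLinearMap, U.injective_subtype.comp e.injective,
    by simp [LinearMap.range_comp]⟩

theorem ncard_subdirectSubspaces (U : Submodule K A) (W : Submodule K B) [FiniteDimensional K U]
    [FiniteDimensional K W] (i : ℕ) :
    (subdirectSubspaces K U W i).ncard =
      subdirectCount K (Module.finrank K U) (Module.finrank K W) i := by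
  obtain ⟨φ, hφ, hφU⟩ := exists_injective_range_eq U
  obtain ⟨ψ, hψ, hψW⟩ := exists_injective_range_eq W
  conv_lhs => rw [← hφU, ← hψW, ← Submodule.map_top, ← Submodule.map_top]
  rw [subdirectSubspaces_map hφ hψ, subdirectCount, Set.ncard_image_of_injective _
    (Submodule.map_injective_of_injective (hφ.prodMap hψ))]

theorem prod_pow_eq_of_mem_subdirectSubspaces {M : Type*} [CommMonoid M] (f : A → M) (h : B → M)
    {i : ℕ} (s : ℕ) {U : Submodule K A} {W : Submodule K B} {V : Submodule K (A × B)}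
    [Fintype U] [Fintype W] [Fintype V] (hV : V ∈ subdirectSubspaces K U W i) :
    (∏ v : V, f v.1.1 * h v.1.2) ^ s =
      (∏ u : U, f u) ^ (Nat.card K ^ (i - Module.finrank K U) * s) *
        (∏ w : W, h w) ^ (Nat.card K ^ (i - Module.finrank K W) * s) := by
  obtain ⟨rfl, rfl, rfl⟩ := hV
  rw [Finset.prod_mul_distrib, mul_pow, pow_mul, pow_mul,
    ← prod_comp_linearMap_eq_prod_map_pow, ← prod_comp_linearMap_eq_prod_map_pow]
  rfl

open Classical in
variable (K A) in
/-- The `i`-dimensional subspaces of a finite vector space `A`. -/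
noncomputable def subspacesOfFinrank [Fintype A] (i : ℕ) : Finset (Submodule K A) :=
  {V | Module.finrank K V = i}

@[simp]
theorem mem_subspacesOfFinrank [Fintype A] {V : Submodule K A} {i : ℕ} :
    V ∈ subspacesOfFinrank K A i ↔ Module.finrank K V = i := by
  simp [subspacesOfFinrank]

variable {R : Type*} [CommSemiring R]

open Classical in
variable (K) in
/-- The sum over the `i`-dimensional subspaces `V` of the `s`-th power of the product of `f` over
`V`. For `f v = θ[v](τ)` on the space of characteristics this is `P_{i,s}(τ)`. -/
noncomputable def subspacePowSum [Fintype A] (f : A → R) (i s : ℕ) : R :=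
  ∑ V ∈ subspacesOfFinrank K A i, (∏ v : V, f v) ^ s

theorem subspacePowSum_comp_linearEquiv [Fintype A] [Fintype B] (e : A ≃ₗ[K] B) (f : B → R)
    (i s : ℕ) : subspacePowSum K (fun x => f (e x)) i s = subspacePowSum K f i s := by
  classical
  refine Finset.sum_equiv (Submodule.orderIsoMapComap e).toEquiv (fun V => ?_) fun V _ => ?_
  · simp [(e.submoduleMap V).finrank_eq]
  · exact congrArg (· ^ s) ((e.submoduleMap V).toEquiv.prod_comp fun u => f u)

variable [Fintype A] [Fintype B]

open Classical in
theorem sum_subdirectSubspaces_prod_pow (f : A → R) (h : B → R) (i s : ℕ) (U : Submodule K A)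
    (W : Submodule K B) :
    ∑ V ∈ (subdirectSubspaces K U W i).toFinset, (∏ v : V, f v.1.1 * h v.1.2) ^ s =
      subdirectCount K (Module.finrank K U) (Module.finrank K W) i *
        ((∏ u : U, f u) ^ (Nat.card K ^ (i - Module.finrank K U) * s) *
          (∏ w : W, h w) ^ (Nat.card K ^ (i - Module.finrank K W) * s)) := by
  rw [Finset.sum_congr rfl fun V hV =>
    prod_pow_eq_of_mem_subdirectSubspaces f h s (Set.mem_toFinset.1 hV), Finset.sum_const,
    ← Set.ncard_eq_toFinset_card', ncard_subdirectSubspaces, nsmul_eq_mul]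

open Classical in
theorem sum_subspaces_with_finrank_map_eq (f : A → R) (h : B → R) (i s n m : ℕ) :
    ∑ V ∈ subspacesOfFinrank K (A × B) i with
        Module.finrank K (V.map (LinearMap.fst K A B)) = n ∧
        Module.finrank K (V.map (LinearMap.snd K A B)) = m,
      (∏ v : V, f v.1.1 * h v.1.2) ^ s =
    subdirectCount K n m i * subspacePowSum K f n (Nat.card K ^ (i - n) * s) *
      subspacePowSum K h m (Nat.card K ^ (i - m) * s) := by
  let projections (V : Submodule K (A × B)) : Submodule K A × Submodule K B :=
    (V.map (LinearMap.fst K A B), V.map (LinearMap.snd K A B))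
  let pairs := subspacesOfFinrank K A n ×ˢ subspacesOfFinrank K B m
  have fiber_eq (U : Submodule K A) (W : Submodule K B) (hU : Module.finrank K U = n)
      (hW : Module.finrank K W = m) :
      {V ∈ subspacesOfFinrank K (A × B) i | (Module.finrank K (projections V).1 = n ∧
        Module.finrank K (projections V).2 = m) ∧ projections V = (U, W)} =
        (subdirectSubspaces K U W i).toFinset := by
    ext V
    simp only [Finset.mem_filter, mem_subspacesOfFinrank, Set.mem_toFinset, projections,
      Prod.mk.injEq]
    constructor
    · rintro ⟨hV, -, hproj⟩
      exact ⟨hV, hproj⟩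
    · rintro ⟨hV, rfl, rfl⟩
      exact ⟨hV, ⟨hU, hW⟩, rfl, rfl⟩
  rw [← Finset.sum_fiberwise_of_maps_to (g := projections) (t := pairs)
    (by simp +contextual [pairs, projections]), mul_assoc, subspacePowSum, subspacePowSum,
    Finset.sum_mul_sum, ← Finset.sum_product', Finset.mul_sum]
  refine Finset.sum_congr rfl fun ⟨U, W⟩ hUW => ?_
  obtain ⟨hU, hW⟩ : Module.finrank K U = n ∧ Module.finrank K W = m := by simpa [pairs] using hUW
  rw [Finset.filter_filter, fiber_eq U W hU hW, sum_subdirectSubspaces_prod_pow, hU, hW]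

theorem subspacePowSum_prod (f : A → R) (h : B → R) (i s : ℕ) :
    subspacePowSum K (fun x : A × B => f x.1 * h x.2) i s =
      ∑ n ∈ Finset.range (i + 1), ∑ m ∈ Finset.range (i + 1),
        subdirectCount K n m i * subspacePowSum K f n (Nat.card K ^ (i - n) * s) *
          subspacePowSum K h m (Nat.card K ^ (i - m) * s) := by
  classical
  have finrank_maps_mem : ∀ V ∈ subspacesOfFinrank K (A × B) i,
      (Module.finrank K (V.map (LinearMap.fst K A B)),
        Module.finrank K (V.map (LinearMap.snd K A B))) ∈
        Finset.range (i + 1) ×ˢ Finset.range (i + 1) := by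
    intro V hV
    obtain rfl := mem_subspacesOfFinrank.1 hV
    simp [Submodule.finrank_map_le]
  rw [subspacePowSum, ← Finset.sum_fiberwise_of_maps_to finrank_maps_mem, Finset.sum_product]
  simp only [Prod.mk.injEq, sum_subspaces_with_finrank_map_eq]

end Subspaces

/-- Splitting a characteristic of genus `k + l` into characteristics of genera `k` and `l`; its
components are `chproj1` and `chproj2`. -/
def thetaCharEquivProd (k l : ℕ) : ThetaChar (k + l) ≃ₗ[ZMod 2] ThetaChar k × ThetaChar l :=
  let split : (Fin (k + l) → ZMod 2) ≃ₗ[ZMod 2] (Fin k → ZMod 2) × (Fin l → ZMod 2) :=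
    LinearEquiv.funCongrLeft (ZMod 2) (ZMod 2) finSumFinEquiv ≪≫ₗ
      LinearEquiv.sumArrowLequivProdArrow (Fin k) (Fin l) (ZMod 2) (ZMod 2)
  split.prodCongr split ≪≫ₗ LinearEquiv.prodProdProdComm (ZMod 2) _ _ _ _

theorem Nsub_eq_subdirectCount (n m i : ℕ) : Nsub n m i = subdirectCount (ZMod 2) n m i :=
  rfl

theorem Pset_eq_prod {g : ℕ} (M : Set (ThetaChar g)) [Fintype M] (τ : Matrix (Fin g) (Fin g) ℂ) :
    Pset M τ = ∏ v : M, theta (v : ThetaChar g) τ := by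
  rw [Pset, ← finprod_set_coe_eq_finprod_mem, finprod_eq_prod_of_fintype]

theorem Pform_eq_subspacePowSum (g i s : ℕ) (τ : Matrix (Fin g) (Fin g) ℂ) :
    Pform g i s τ = subspacePowSum (ZMod 2) (theta · τ) i s := by
  classical
  rw [Pform, finsum_mem_eq_toFinset_sum, subspacePowSum]
  refine Finset.sum_congr (by ext; simp) fun V _ => ?_
  rw [Pset_eq_prod]
  rfl

theorem restriction_of_P_to_decomposable_locus
    (k l i s : ℕ) (hk : 1 ≤ k) (hl : 1 ≤ l) (hs : 1 ≤ s)
    (τ₁ : Matrix (Fin k) (Fin k) ℂ) (τ₂ : Matrix (Fin l) (Fin l) ℂ)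
    (hτ₁ : IsSiegel τ₁) (hτ₂ : IsSiegel τ₂) :
    Pform (k + l) i s (blockDiag τ₁ τ₂) =
      ∑ n ∈ Finset.range (i + 1), ∑ m ∈ Finset.range (i + 1),
        (Nsub n m i : ℂ) * Pform k n (2 ^ (i - n) * s) τ₁ *
          Pform l m (2 ^ (i - m) * s) τ₂ := by
  let split : ThetaChar (k + l) ≃ₗ[ZMod 2] ThetaChar k × ThetaChar l := thetaCharEquivProd k l
  simp only [Pform_eq_subspacePowSum, Nsub_eq_subdirectCount]
  calc subspacePowSum (ZMod 2) (theta · (blockDiag τ₁ τ₂)) i s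
      = subspacePowSum (ZMod 2) (fun v => theta (split v).1 τ₁ * theta (split v).2 τ₂) i s :=
        congrArg (subspacePowSum (ZMod 2) · i s)
          (funext fun v => theta_blockDiag v hτ₁.2 hτ₂.2)
    _ = subspacePowSum (ZMod 2) (fun x : ThetaChar k × ThetaChar l => theta x.1 τ₁ * theta x.2 τ₂)
          i s := subspacePowSum_comp_linearEquiv split (fun x => theta x.1 τ₁ * theta x.2 τ₂) i s
    _ = _ := by rw [subspacePowSum_prod (theta · τ₁) (theta · τ₂), Nat.card_zmod]
end

section
/- For all nonnegative integers n and m, the alternating sum identity Σ_{i=0}^{n+m} (−1)^i · 2^{i(i−1)/2} · N(n,m;i) = (−1)^{n+m} · 2^{n(n−1)/2 + m(m−1)/2} holds in ℤ. -/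
open scoped BigOperators

/-!
The map `V ↦ (V.map fst, V.map snd)` from subspaces of `A × B` to pairs of subspaces is the lower
adjoint of `(p, q) ↦ p.prod q`, and `p.prod q = ⊥` only for `p = q = ⊥`. Rota's theorem on Galois
connections therefore says that the values `μ(⊥, V)`, summed over all `V` with both projections
surjective, add up to `μ(⊥, A) * μ(⊥, B)`. The identity is this equation, since
`μ(⊥, V) = (-1) ^ d * q ^ (d.choose 2)` for a `d`-dimensional `V` over a field with `q` elements.
That value also comes from Rota's theorem: for a line `L`, the adjunction between `V ↦ V ⊔ L` and
the inclusion of the subspaces above `L` expresses `μ(⊥, E)` through the `q ^ (d - 1)` complements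
of `L`.
-/

open Finset IncidenceAlgebra Module

section GaloisConnection

variable {𝕜 α β : Type*} [Ring 𝕜] [PartialOrder α] [OrderBot α] [LocallyFiniteOrder α]
  [DecidableEq α] [PartialOrder β] [OrderBot β] [LocallyFiniteOrder β] [DecidableEq β]
  {l : α → β} {u : β → α}

theorem sum_mu_bot_fiber_eq_sum_mu (gc : GaloisConnection l u) (b : β) :
    ∑ a ∈ Iic (u b) with l a = b, mu 𝕜 ⊥ a = ∑ c ∈ Iic b with u c = ⊥, mu 𝕜 c b := by
  have sum_fibers (c : β) : (if u c = ⊥ then 1 else 0 : 𝕜) =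
      ∑ d ∈ Iic c, ∑ a ∈ Iic (u d) with l a = d, mu 𝕜 ⊥ a := by
    have l_le : ∀ a ∈ Iic (u c), l a ∈ Iic c := by simp [gc.le_iff_le]
    have fiber_eq : ∀ d ∈ Iic c, {a ∈ Iic (u c) | l a = d} = {a ∈ Iic (u d) | l a = d} := by
      intro d hd
      ext a
      simp only [mem_filter, mem_Iic, ← gc.le_iff_le]
      exact and_congr_left fun h ↦ by simpa [h] using hd
    rw [sum_congr rfl fun d hd ↦ by rw [← fiber_eq d hd], sum_fiberwise_of_maps_to l_le,
      ← Icc_bot, sum_Icc_mu_right]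
    simp only [eq_comm]
  rw [moebius_inversion_bot _ _ sum_fibers b, sum_filter]
  simp only [mul_ite, mul_one, mul_zero]

theorem sum_mu_bot_fiber_eq_mu_bot (gc : GaloisConnection l u) {b : β}
    (hu : ∀ c ≤ b, u c = ⊥ ↔ c = ⊥) :
    ∑ a ∈ Iic (u b) with l a = b, mu 𝕜 ⊥ a = mu 𝕜 ⊥ b := by
  have fiber_eq : {c ∈ Iic b | u c = ⊥} = {⊥} := by
    ext c
    simp only [mem_filter, mem_Iic, mem_singleton]
    exact ⟨fun h ↦ (hu c h.1).1 h.2, fun h ↦ h ▸ ⟨bot_le, (hu ⊥ bot_le).2 rfl⟩⟩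
  rw [sum_mu_bot_fiber_eq_sum_mu gc, fiber_eq, sum_singleton]

end GaloisConnection

section Lattice

variable (𝕜 : Type*) {α : Type*} [Ring 𝕜] [Lattice α] [LocallyFiniteOrder α] [DecidableEq α]

-- Weisner's theorem: apply Rota's formula to `x ↦ x ⊔ a`, the lower adjoint of `Ici a ↪ α`.
theorem sum_mu_bot_sup_eq_zero [OrderBot α] {a b : α} (ha : a ≠ ⊥) (hab : a ≤ b) :
    ∑ x ∈ Iic b with x ⊔ a = b, mu 𝕜 ⊥ x = 0 := by
  classical
  let supLeft (x : α) : Set.Ici a := ⟨x ⊔ a, le_sup_right⟩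
  have gc : GaloisConnection supLeft Subtype.val := fun x y ↦
    sup_le_iff.trans (and_iff_left y.2)
  have no_bot (c : Set.Ici a) : (c : α) ≠ ⊥ := fun hc ↦ ha (le_bot_iff.1 (hc ▸ c.2))
  simpa [supLeft, Subtype.ext_iff, no_bot] using
    sum_mu_bot_fiber_eq_sum_mu (𝕜 := 𝕜) gc ⟨b, hab⟩

theorem eulerChar_eq_neg_sum_isCompl [BoundedOrder α] [Fintype α] {a : α} (ha : IsAtom a)
    [DecidablePred (IsCompl a)] :
    eulerChar 𝕜 α = -∑ x with IsCompl a x, mu 𝕜 ⊥ x := by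
  have sup_eq_top :
      {x ∈ Iic (⊤ : α) | x ⊔ a = ⊤} = insert ⊤ ({x | IsCompl a x} : Finset α) := by
    ext x
    simp only [mem_filter, mem_Iic, le_top, true_and, mem_insert, mem_univ, isCompl_iff,
      ← ha.not_le_iff_disjoint, codisjoint_iff, sup_comm a x]
    by_cases hax : a ≤ x
    · simp [hax]
    · have : x ≠ ⊤ := fun hx ↦ hax (hx ▸ le_top)
      simp [hax, this]
  have top_notMem : (⊤ : α) ∉ ({x | IsCompl a x} : Finset α) := by
    simpa using fun h : IsCompl a ⊤ ↦ ha.ne_bot (by simpa using h.inf_eq_bot)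
  have weisner := sum_mu_bot_sup_eq_zero 𝕜 ha.ne_bot le_top
  rw [sup_eq_top, sum_insert top_notMem] at weisner
  exact eq_neg_of_add_eq_zero_left weisner

end Lattice

section Projections

variable {R M N : Type*} [Semiring R] [AddCommMonoid M] [Module R M] [AddCommMonoid N] [Module R N]

theorem gc_map_fst_map_snd_prod : GaloisConnection
    (fun V : Submodule R (M × N) ↦ (V.map (.fst R M N), V.map (.snd R M N)))
    (fun p ↦ p.1.prod p.2) :=
  fun _ _ ↦ (Submodule.le_prod_iff R M N).symm

end Projections

section Complement

variable {K E F : Type*} [Field K] [AddCommGroup E] [Module K E] [AddCommGroup F] [Module K F]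

theorem card_linearMap_comp_subtype_eq [Module.Finite K E] [Module.Finite K F] (p : Submodule K E)
    (g : p →ₗ[K] F) :
    Nat.card {f : E →ₗ[K] F // f ∘ₗ p.subtype = g} =
      Nat.card K ^ (finrank K (E ⧸ p) * finrank K F) := by
  let restrict : (E →ₗ[K] F) →ₗ[K] (p →ₗ[K] F) := p.subtype.lcomp K F
  have restrict_surjective : Function.Surjective restrict := fun h ↦ h.exists_extend
  have finrank_ker : finrank K restrict.ker = finrank K (E ⧸ p) * finrank K F := by
    have rank_nullity := restrict.finrank_range_add_finrank_ker
    rw [LinearMap.range_eq_top.2 restrict_surjective, finrank_top, finrank_linearMap,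
      finrank_linearMap, ← p.finrank_quotient_add_finrank] at rank_nullity
    linarith
  rw [← finrank_ker, ← natCard_eq_pow_finrank]
  exact Nat.card_congr
    (AddMonoidHom.fiberEquivKerOfSurjective (f := restrict.toAddMonoidHom) restrict_surjective g)

theorem card_isCompl [Module.Finite K E] (p : Submodule K E) :
    Nat.card {q : Submodule K E // IsCompl p q} =
      Nat.card K ^ (finrank K (E ⧸ p) * finrank K p) := by
  rw [← card_linearMap_comp_subtype_eq p LinearMap.id, Nat.card_congr p.isComplEquivProj]
  simp only [LinearMap.ext_iff, LinearMap.comp_apply, Submodule.subtype_apply, LinearMap.id_apply]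

end Complement

section SubspaceLattice

variable (𝕜 : Type*) {K E A B : Type*} [Field K] [Finite K]
  [AddCommGroup E] [Module K E] [Module.Finite K E]
  [AddCommGroup A] [Module K A] [Module.Finite K A]
  [AddCommGroup B] [Module K B] [Module.Finite K B]

noncomputable local instance submoduleFintype : Fintype (Submodule K E) :=
  have : Finite E := Module.finite_of_finite K
  Fintype.ofFinite _

open Classical in
noncomputable local instance submoduleLocallyFiniteOrder : LocallyFiniteOrder (Submodule K E) :=
  Fintype.toLocallyFiniteOrder

open Classical in
theorem mu_bot_eq_eulerChar [Ring 𝕜] (V : Submodule K E) :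
    mu 𝕜 ⊥ V = eulerChar 𝕜 (Submodule K V) := by
  have comap_eq_bot : ∀ W ≤ V, W.comap V.subtype = ⊥ ↔ W = ⊥ := by
    intro W hW
    rw [← Submodule.disjoint_iff_comap_eq_bot, disjoint_iff, inf_eq_right.2 hW]
  have fiber_eq : {W ∈ Iic (V.comap V.subtype) | W.map V.subtype = V} = {⊤} := by
    ext W
    simpa using (Submodule.map_injective_of_injective V.injective_subtype).eq_iff'
      V.map_subtype_top
  rw [← sum_mu_bot_fiber_eq_mu_bot (Submodule.gc_map_comap V.subtype) comap_eq_bot, fiber_eq,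
    sum_singleton, eulerChar]

open Classical in
theorem eulerChar_submodule [CommRing 𝕜] :
    eulerChar 𝕜 (Submodule K E) =
      (-1) ^ finrank K E * (Nat.card K : 𝕜) ^ (finrank K E).choose 2 := by
  induction hd : finrank K E generalizing E with
  | zero =>
    have := finrank_zero_iff.1 hd
    simp [eulerChar, Subsingleton.elim (⊤ : Submodule K E) ⊥]
  | succ d ih =>
    have := nontrivial_of_finrank_eq_succ hd
    obtain ⟨x, hx⟩ := exists_ne (0 : E)
    have finrank_line : finrank K (K ∙ x) = 1 := finrank_span_singleton hx
    have finrank_quotient : finrank K (E ⧸ K ∙ x) = d := by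
      have := (K ∙ x).finrank_quotient_add_finrank
      omega
    have mu_compl : ∀ V ∈ ({V | IsCompl (K ∙ x) V} : Finset (Submodule K E)),
        mu 𝕜 ⊥ V = (-1) ^ d * (Nat.card K : 𝕜) ^ d.choose 2 := by
      intro V hV
      have := Submodule.finrank_add_eq_of_isCompl (mem_filter.1 hV).2
      rw [mu_bot_eq_eulerChar, ih (by omega)]
    have card_compl : #{V | IsCompl (K ∙ x) V} = Nat.card K ^ d := by
      rw [← Fintype.card_subtype, ← Nat.card_eq_fintype_card, card_isCompl, finrank_line,
        finrank_quotient, mul_one]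
    rw [eulerChar_eq_neg_sum_isCompl 𝕜 (nonzero_span_atom x hx), sum_congr rfl mu_compl,
      sum_const, card_compl, nsmul_eq_mul, Nat.choose_succ_succ', Nat.choose_one_right]
    push_cast
    ring

open Classical in
theorem mu_bot_submodule [CommRing 𝕜] (V : Submodule K E) :
    mu 𝕜 ⊥ V = (-1) ^ finrank K V * (Nat.card K : 𝕜) ^ (finrank K V).choose 2 := by
  rw [mu_bot_eq_eulerChar, eulerChar_submodule]

open Classical in
theorem sum_mu_bot_map_fst_map_snd_eq_top [Ring 𝕜] :
    ∑ V : Submodule K (A × B) with V.map (.fst K A B) = ⊤ ∧ V.map (.snd K A B) = ⊤, mu 𝕜 ⊥ V =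
      eulerChar 𝕜 (Submodule K A) * eulerChar 𝕜 (Submodule K B) := by
  have prod_eq_bot (p : Submodule K A × Submodule K B) : p.1.prod p.2 = ⊥ ↔ p = ⊥ := by
    rw [Submodule.prod_eq_bot_iff, Prod.ext_iff, Prod.fst_bot, Prod.snd_bot]
  have rota := sum_mu_bot_fiber_eq_mu_bot (𝕜 := 𝕜) gc_map_fst_map_snd_prod (b := ⊤)
    fun p _ ↦ prod_eq_bot p
  rw [← eulerChar_prod, eulerChar]
  simpa [Prod.ext_iff] using rota

theorem sum_range_mul_card_finrank_eq [Semiring 𝕜] (w : ℕ → 𝕜) (P : Submodule K E → Prop)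
    [DecidablePred P] :
    ∑ i ∈ range (finrank K E + 1),
        w i * (Nat.card {V : Submodule K E // finrank K V = i ∧ P V} : 𝕜) =
      ∑ V with P V, w (finrank K V) := by
  have finrank_mem : ∀ V ∈ ({V | P V} : Finset (Submodule K E)),
      finrank K V ∈ range (finrank K E + 1) :=
    fun V _ ↦ mem_range_succ_iff.2 V.finrank_le
  rw [← sum_fiberwise_of_maps_to finrank_mem]
  refine sum_congr rfl fun i _ ↦ ?_
  rw [sum_congr rfl fun V hV ↦ by rw [(mem_filter.1 hV).2], sum_const, nsmul_eq_mul, Nat.cast_comm,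
    Nat.card_eq_fintype_card, Fintype.card_subtype, filter_filter]
  simp only [and_comm]

end SubspaceLattice

theorem Nsub_alternating_sum_general (K A B : Type*) [Field K] [Finite K]
    [AddCommGroup A] [Module K A] [Module.Finite K A]
    [AddCommGroup B] [Module K B] [Module.Finite K B] :
    ∑ i ∈ range (finrank K A + finrank K B + 1),
        (-1 : ℤ) ^ i * (Nat.card K : ℤ) ^ i.choose 2 *
          (Nat.card {V : Submodule K (A × B) // finrank K V = i ∧
            V.map (.fst K A B) = ⊤ ∧ V.map (.snd K A B) = ⊤} : ℤ) =
      (-1 : ℤ) ^ (finrank K A + finrank K B) *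
        (Nat.card K : ℤ) ^ ((finrank K A).choose 2 + (finrank K B).choose 2) := by
  classical
  rw [← finrank_prod,
    sum_range_mul_card_finrank_eq ℤ fun i ↦ (-1) ^ i * (Nat.card K : ℤ) ^ i.choose 2]
  simp only [← mu_bot_submodule]
  rw [sum_mu_bot_map_fst_map_snd_eq_top, eulerChar_submodule, eulerChar_submodule, finrank_prod]
  ring

theorem Nsub_alternating_sum (n m : ℕ) :
    ∑ i ∈ Finset.range (n + m + 1),
        (-1 : ℤ) ^ i * 2 ^ (i * (i - 1) / 2) * (Nsub n m i : ℤ) =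
      (-1 : ℤ) ^ (n + m) * 2 ^ (n * (n - 1) / 2 + m * (m - 1) / 2) := by
  simpa [Nat.choose_two_right, Nsub] using
    Nsub_alternating_sum_general (ZMod 2) (Fin n → ZMod 2) (Fin m → ZMod 2)
end

section
/- Let n, m, i, a, b be nonnegative integers, let V₁ be an n-dimensional 𝔽₂-linear subspace of 𝔽₂^a, and let V₂ be an m-dimensional 𝔽₂-linear subspace of 𝔽₂^b. Then the number of i-dimensional 𝔽₂-linear subspaces V of 𝔽₂^a ⊕ 𝔽₂^b whose image under the first projection equals V₁ and whose image under the second projection equals V₂ is N(n,m;i); in particular it depends only on n, m and i. -/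
open scoped BigOperators

section

open Module

variable {R M N M' N' : Type*} [Semiring R]
  [AddCommMonoid M] [Module R M] [AddCommMonoid N] [Module R N]
  [AddCommMonoid M'] [Module R M'] [AddCommMonoid N'] [Module R N']

/-- The submodules of `M × N` of rank `i` that project onto `V₁` in the first factor and onto `V₂`
in the second, i.e. the subdirect products of `V₁` and `V₂` of rank `i`. The rank is `finrank`, so
for `i = 0` the set also contains any such submodules of infinite rank. -/
def submodulesWithProjections (i : ℕ) (V₁ : Submodule R M) (V₂ : Submodule R N) :
    Set (Submodule R (M × N)) :=
  {V | finrank R V = i ∧ V.map (LinearMap.fst R M N) = V₁ ∧ V.map (LinearMap.snd R M N) = V₂}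

theorem map_fst_map_prodMap (f : M →ₗ[R] M') (g : N →ₗ[R] N') (V : Submodule R (M × N)) :
    (V.map (f.prodMap g)).map (LinearMap.fst R M' N') = (V.map (LinearMap.fst R M N)).map f := by
  rw [← Submodule.map_comp, ← Submodule.map_comp]
  rfl

theorem map_snd_map_prodMap (f : M →ₗ[R] M') (g : N →ₗ[R] N') (V : Submodule R (M × N)) :
    (V.map (f.prodMap g)).map (LinearMap.snd R M' N') = (V.map (LinearMap.snd R M N)).map g := by
  rw [← Submodule.map_comp, ← Submodule.map_comp]
  rfl

variable {f : M →ₗ[R] M'} {g : N →ₗ[R] N'}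

theorem map_prodMap_mem_submodulesWithProjections_iff (hf : Function.Injective f)
    (hg : Function.Injective g) {i : ℕ} {V₁ : Submodule R M} {V₂ : Submodule R N}
    {V : Submodule R (M × N)} :
    V.map (f.prodMap g) ∈ submodulesWithProjections i (V₁.map f) (V₂.map g) ↔
      V ∈ submodulesWithProjections i V₁ V₂ := by
  have prodMap_injective : Function.Injective (f.prodMap g) := hf.prodMap hg
  have finrank_map : finrank R (V.map (f.prodMap g)) = finrank R V :=
    (Submodule.equivMapOfInjective _ prodMap_injective V).finrank_eq.symm
  simp only [submodulesWithProjections, Set.mem_ofPred_eq, finrank_map, map_fst_map_prodMap,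
    map_snd_map_prodMap, (Submodule.map_injective_of_injective hf).eq_iff,
    (Submodule.map_injective_of_injective hg).eq_iff]

theorem image_map_prodMap_submodulesWithProjections (hf : Function.Injective f)
    (hg : Function.Injective g) (i : ℕ) (V₁ : Submodule R M) (V₂ : Submodule R N) :
    Submodule.map (f.prodMap g) '' submodulesWithProjections i V₁ V₂ =
      submodulesWithProjections i (V₁.map f) (V₂.map g) := by
  ext W
  constructor
  · rintro ⟨V, hV, rfl⟩
    exact (map_prodMap_mem_submodulesWithProjections_iff hf hg).2 hV
  · intro hW
    have le_range : W ≤ LinearMap.range (f.prodMap g) := calc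
      W ≤ (V₁.map f).prod (V₂.map g) :=
        (Submodule.le_prod_iff R M' N').2 ⟨hW.2.1.le, hW.2.2.le⟩
      _ = (V₁.prod V₂).map (f.prodMap g) := (LinearMap.prodMap_map_prod f g V₁ V₂).symm
      _ ≤ LinearMap.range (f.prodMap g) := LinearMap.map_le_range
    have map_comap : (W.comap (f.prodMap g)).map (f.prodMap g) = W :=
      Submodule.map_comap_eq_self le_range
    rw [← map_comap] at hW
    exact ⟨_, (map_prodMap_mem_submodulesWithProjections_iff hf hg).1 hW, map_comap⟩

theorem encard_submodulesWithProjections_map (hf : Function.Injective f)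
    (hg : Function.Injective g) (i : ℕ) (V₁ : Submodule R M) (V₂ : Submodule R N) :
    (submodulesWithProjections i (V₁.map f) (V₂.map g)).encard =
      (submodulesWithProjections i V₁ V₂).encard := by
  have prodMap_injective : Function.Injective (f.prodMap g) := hf.prodMap hg
  rw [← image_map_prodMap_submodulesWithProjections hf hg,
    (Submodule.map_injective_of_injective prodMap_injective).encard_image]

theorem exists_injective_map_top_eq_of_finrank_eq [StrongRankCondition R] {n : ℕ}
    (V : Submodule R M) [Module.Free R V] [Module.Finite R V] (hV : finrank R V = n) :
    ∃ f : (Fin n → R) →ₗ[R] M, Function.Injective f ∧ (⊤ : Submodule R (Fin n → R)).map f = V := by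
  let e : (Fin n → R) ≃ₗ[R] V := (finBasisOfFinrankEq R V hV).equivFun.symm
  refine ⟨V.subtype ∘ₗ e, V.injective_subtype.comp e.injective, ?_⟩
  rw [Submodule.map_top, LinearMap.range_comp_of_range_eq_top _ e.range, Submodule.range_subtype]

theorem card_subspaces_with_given_projections_general [StrongRankCondition R] {n m : ℕ} (i : ℕ)
    (V₁ : Submodule R M) (V₂ : Submodule R N) [Module.Free R V₁] [Module.Finite R V₁]
    [Module.Free R V₂] [Module.Finite R V₂] (h₁ : finrank R V₁ = n) (h₂ : finrank R V₂ = m) :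
    (submodulesWithProjections i V₁ V₂).encard =
      (submodulesWithProjections i (⊤ : Submodule R (Fin n → R))
        (⊤ : Submodule R (Fin m → R))).encard := by
  obtain ⟨f, hf, rfl⟩ := exists_injective_map_top_eq_of_finrank_eq V₁ h₁
  obtain ⟨g, hg, rfl⟩ := exists_injective_map_top_eq_of_finrank_eq V₂ h₂
  exact encard_submodulesWithProjections_map hf hg i ⊤ ⊤

end

theorem card_subspaces_with_given_projections (n m i a b : ℕ)
    (V₁ : Submodule (ZMod 2) (Fin a → ZMod 2)) (V₂ : Submodule (ZMod 2) (Fin b → ZMod 2))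
    (h₁ : Module.finrank (ZMod 2) ↥V₁ = n) (h₂ : Module.finrank (ZMod 2) ↥V₂ = m) :
    Nat.card {V : Submodule (ZMod 2) ((Fin a → ZMod 2) × (Fin b → ZMod 2)) //
      Module.finrank (ZMod 2) ↥V = i ∧
      V.map (LinearMap.fst (ZMod 2) (Fin a → ZMod 2) (Fin b → ZMod 2)) = V₁ ∧
      V.map (LinearMap.snd (ZMod 2) (Fin a → ZMod 2) (Fin b → ZMod 2)) = V₂} =
      Nsub n m i := by
  exact congrArg ENat.toNat (card_subspaces_with_given_projections_general i V₁ V₂ h₁ h₂)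
end
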